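/- arXiv:2311.13178 — 2 statements merged into one kernel-verified Lean document; each statement's English description precedes it below -/
import Mathlib

section
/- Let A be a unital complex algebra equipped with a unital linear functional Ψ and a tracial linear functional DΨ with DΨ(1_A) = 0. Then the cyclic free cumulants Dκ^Ψ_n of the pair (Ψ, DΨ) are cyclically invariant: for all a₁,…,aₙ ∈ A, Dκ^Ψ_n(a₁,…,aₙ) = Dκ^Ψ_n(a₂,…,aₙ,a₁). -/
open scoped BigOperators

namespace NCProb

variable {A : Type*} [Ring A] [Algebra ℂ A]

/-- Ordered sublist of the tuple `a` on the indices satisfying `P`. -/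
noncomputable def ordList {n : ℕ} (a : Fin n → A) (P : Fin n → Prop) [DecidablePred P] :
    List A :=
  ((List.finRange n).filter fun i => decide (P i)).map a

/-- `(a, j)` is an alternating sequence for the pair of sets `(S₁, S₂)`:
`a i ∈ S₁` when `j i = false`, `a i ∈ S₂` when `j i = true`, and consecutive labels differ. -/
def Alternates {n : ℕ} (S₁ S₂ : Set A) (a : Fin n → A) (j : Fin n → Bool) : Prop :=
  (∀ i, a i ∈ (if j i then S₂ else S₁)) ∧
    ∀ (i : ℕ) (h : i + 1 < n), j ⟨i, Nat.lt_of_succ_lt h⟩ ≠ j ⟨i + 1, h⟩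

def IsTracial (ω : A →ₗ[ℂ] ℂ) : Prop := ∀ a b : A, ω (a * b) = ω (b * a)

/-- Freeness of a pair of subalgebras (given as sets) with respect to `Ψ`. -/
def IsFree (Ψ : A →ₗ[ℂ] ℂ) (S₁ S₂ : Set A) : Prop :=
  ∀ (n : ℕ) (a : Fin n → A) (j : Fin n → Bool),
    Alternates S₁ S₂ a j → (∀ i, Ψ (a i) = 0) → Ψ (List.ofFn a).prod = 0

/-- Conditional freeness with respect to the pair `(Ψ, φ)`. -/
def IsCondFree (Ψ φ : A →ₗ[ℂ] ℂ) (S₁ S₂ : Set A) : Prop :=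
  ∀ (n : ℕ) (a : Fin n → A) (j : Fin n → Bool),
    Alternates S₁ S₂ a j → (∀ i, Ψ (a i) = 0) →
      Ψ (List.ofFn a).prod = 0 ∧ φ (List.ofFn a).prod = ∏ i, φ (a i)

/-- Cyclic freeness with respect to the pair `(Ψ, ω)`. -/
def IsCyclicallyFree (Ψ ω : A →ₗ[ℂ] ℂ) (S₁ S₂ : Set A) : Prop :=
  IsFree Ψ S₁ S₂ ∧
    ∀ (n : ℕ) (a : Fin n → A) (j : Fin n → Bool) (hn : 2 ≤ n),
      Alternates S₁ S₂ a j →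
      j ⟨0, by omega⟩ ≠ j ⟨n - 1, by omega⟩ →
      (∀ i, Ψ (a i) = 0) → ω (List.ofFn a).prod = 0

/-- Infinitesimal freeness with respect to the pair `(Ψ, ω)`. -/
def IsInfFree (Ψ ω : A →ₗ[ℂ] ℂ) (S₁ S₂ : Set A) : Prop :=
  ∀ (n : ℕ) (a : Fin n → A) (j : Fin n → Bool),
    Alternates S₁ S₂ a j → (∀ i, Ψ (a i) = 0) →
      Ψ (List.ofFn a).prod = 0 ∧
      ω (List.ofFn a).prod = ∑ i : Fin n, ω (a i) * Ψ (ordList a fun k => k ≠ i).prod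

/-- Cyclic-conditional freeness with respect to the triple `(Ψ, φ, ω)`. -/
def IsCycCondFree (Ψ φ ω : A →ₗ[ℂ] ℂ) (S₁ S₂ : Set A) : Prop :=
  IsCondFree Ψ φ S₁ S₂ ∧
    ∀ (n : ℕ) (a : Fin n → A) (j : Fin n → Bool) (hn : 2 ≤ n),
      Alternates S₁ S₂ a j →
      j ⟨0, by omega⟩ ≠ j ⟨n - 1, by omega⟩ →
      (∀ i, Ψ (a i) = 0) → ω (List.ofFn a).prod = ∏ i, φ (a i)

/-- Boolean cumulants (with explicit fuel), via the standard recursion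
`φ(a₁⋯aₙ) = Σ_{k=1}^{n} β_k(a₁,…,a_k)·φ(a_{k+1}⋯aₙ)`. -/
noncomputable def booleanAux (φ : A →ₗ[ℂ] ℂ) : ℕ → List A → ℂ
  | 0, _ => 0
  | fuel + 1, l =>
      φ l.prod - ∑ k ∈ Finset.range (l.length - 1),
        booleanAux φ fuel (l.take (k + 1)) * φ (l.drop (k + 1)).prod

/-- The Boolean cumulant `β^φ(a₁,…,aₙ)` of the entries of the list `l = [a₁,…,aₙ]`. -/
noncomputable def booleanCumulant (φ : A →ₗ[ℂ] ℂ) (l : List A) : ℂ :=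
  booleanAux φ l.length l

/-- Product of the `Ψ`-moments of the gaps between consecutive elements of `V`. -/
noncomputable def gapFactor {n : ℕ} (Ψ : A →ₗ[ℂ] ℂ) (a : Fin n → A) (V : Finset (Fin n)) : ℂ :=
  (((V.sort (· ≤ ·)).zip (V.sort (· ≤ ·)).tail).map fun p =>
      Ψ (ordList a fun i => p.1 < i ∧ i < p.2).prod).prod

noncomputable def headProd {n : ℕ} (a : Fin n → A) (V : Finset (Fin n)) : A :=
  (ordList a fun i => ∀ v ∈ V, i < v).prod

noncomputable def tailProd {n : ℕ} (a : Fin n → A) (V : Finset (Fin n)) : A :=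
  (ordList a fun i => ∀ v ∈ V, v < i).prod

/-- Cumulants with respect to `(Ψ, θ)` with explicit fuel, defined through the
moment-cumulant recursion obtained by singling out the distinguished block `V`:
mode 0: free cumulants (`θ = Ψ`, the block `V` contains the first letter);
mode 1: infinitesimal free cumulants (wrap gap read in linear order `head·tail`);
mode 2: cyclic free cumulants (wrap gap read in cyclic order `tail·head`). -/
noncomputable def cumulAux (Ψ θ : A →ₗ[ℂ] ℂ) (mode : ℕ) : ℕ → List A → ℂ
  | 0, _ => 0
  | fuel + 1, l =>
      θ l.prod - ∑ V : Finset (Fin l.length),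
        if V.Nonempty ∧ V ≠ Finset.univ ∧ (mode ≠ 0 ∨ ∃ v ∈ V, (v : ℕ) = 0) then
          cumulAux Ψ θ mode fuel ((V.sort (· ≤ ·)).map l.get) *
            Ψ (if mode = 2 then tailProd l.get V * headProd l.get V
               else headProd l.get V * tailProd l.get V) *
            gapFactor Ψ l.get V
        else 0

/-- The free cumulant `κ^Ψ_n(a₁,…,aₙ)`. -/
noncomputable def freeCumulant (Ψ : A →ₗ[ℂ] ℂ) (l : List A) : ℂ :=
  cumulAux Ψ Ψ 0 l.length l

/-- The infinitesimal free cumulant `∂κ^Ψ_n(a₁,…,aₙ)` of the pair `(Ψ, dΨ)`. -/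
noncomputable def infCumulant (Ψ dΨ : A →ₗ[ℂ] ℂ) (l : List A) : ℂ :=
  cumulAux Ψ dΨ 1 l.length l

/-- The cyclic free cumulant `Dκ^Ψ_n(a₁,…,aₙ)` of the pair `(Ψ, dΨ)`. -/
noncomputable def cycCumulant (Ψ dΨ : A →ₗ[ℂ] ℂ) (l : List A) : ℂ :=
  cumulAux Ψ dΨ 2 l.length l

/-- Vanishing of mixed cumulants: `f` vanishes on mixed tuples from `S₁ ∪ S₂`. -/
def MixedVanishes (f : List A → ℂ) (S₁ S₂ : Set A) : Prop :=
  ∀ (n : ℕ) (a : Fin n → A), 2 ≤ n → (∀ i, a i ∈ S₁ ∪ S₂) →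
    (∃ k, a k ∈ S₁) → (∃ l, a l ∈ S₂) → f (List.ofFn a) = 0

/-- The value `[φ](a₁ ⊗ ⋯ ⊗ aₙ) = Σ_{1≤i₁<…<i_ℓ≤n} ∏_k β^φ`(cyclic pieces)`. -/
noncomputable def mkValue (φ : A →ₗ[ℂ] ℂ) {n : ℕ} (a : Fin n → A) : ℂ :=
  ∑ V : Finset (Fin n),
    if V.Nonempty then
      (((V.sort (· ≤ ·)).zip (V.sort (· ≤ ·)).tail).map fun p =>
          booleanCumulant φ (ordList a fun i => p.1 ≤ i ∧ i < p.2)).prod *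
        booleanCumulant φ
          ((ordList a fun i => ∀ v ∈ V, v ≤ i) ++ ordList a fun i => ∀ v ∈ V, i < v)
    else 0

/-- Non-crossing partitions of `{1,…,n}` encoded as finsets of blocks. -/
def IsNCPartition {n : ℕ} (P : Finset (Finset (Fin n))) : Prop :=
  (∀ B ∈ P, B.Nonempty) ∧
    (∀ i : Fin n, ∃! B, B ∈ P ∧ i ∈ B) ∧
    ∀ B₁ ∈ P, ∀ B₂ ∈ P, ∀ p ∈ B₁, ∀ r ∈ B₁, ∀ q ∈ B₂, ∀ s ∈ B₂,
      p < q → q < r → r < s → B₁ = B₂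

open scoped Classical in
/-- The value `⌞Ψ⌟(a₁⊗⋯⊗aₙ) = Σ_{π ∈ NC(n)} (n+1-|π|)·κ^Ψ_π(a₁,…,aₙ)`. -/
noncomputable def lsoulValue (Ψ : A →ₗ[ℂ] ℂ) {n : ℕ} (a : Fin n → A) : ℂ :=
  ∑ P : Finset (Finset (Fin n)),
    if IsNCPartition P then
      ((n : ℂ) + 1 - P.card) * ∏ B ∈ P, freeCumulant Ψ ((B.sort (· ≤ ·)).map a)
    else 0

/-- `F` extends the linear functional `f` from `A` to the tensor algebra `T(A)`:
`F(a₁ ⊗ ⋯ ⊗ aₙ) = f(a₁⋯aₙ)`. -/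
def ExtendsTo (f : A →ₗ[ℂ] ℂ) (F : TensorAlgebra ℂ A →ₗ[ℂ] ℂ) : Prop :=
  ∀ l : List A, l ≠ [] → F (l.map fun x => TensorAlgebra.ι ℂ x).prod = f l.prod

/-- Pointwise equivalent predicates select the same sublist. -/
theorem ordList_congr {B : Type*} {n : ℕ} (a : Fin n → B) {P Q : Fin n → Prop} [DecidablePred P]
    [DecidablePred Q] (h : ∀ i, P i ↔ Q i) : ordList a P = ordList a Q := by
  unfold ordList
  congr 1
  exact List.filter_congr fun i _ => by simp [h i]

theorem ordList_cons {B : Type*} {n : ℕ} (x : B) (b : Fin n → B) (P : Fin (n + 1) → Prop)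
    [DecidablePred P] :
    ordList (Fin.cons x b : Fin (n + 1) → B) P =
      (if P 0 then [x] else []) ++ ordList b fun i => P i.succ := by
  unfold ordList
  rw [List.finRange_succ, List.filter_cons]
  split_ifs <;> simp_all [List.filter_map, Function.comp_def]

theorem ordList_snoc {B : Type*} {n : ℕ} (x : B) (b : Fin n → B) (P : Fin (n + 1) → Prop)
    [DecidablePred P] :
    ordList (Fin.snoc b x : Fin (n + 1) → B) P =
      (ordList b fun i => P i.castSucc) ++ if P (Fin.last n) then [x] else [] := by
  unfold ordList
  rw [List.finRange_succ_last, List.filter_append]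
  split_ifs <;> simp_all [List.filter_map, Function.comp_def]

theorem ordList_false {B : Type*} {n : ℕ} (a : Fin n → B) : ordList a (fun _ => False) = [] := by
  simp [ordList]

theorem sort_map_succEmb {n : ℕ} (S : Finset (Fin n)) :
    (S.map (Fin.succEmb n)).sort (· ≤ ·) = (S.sort (· ≤ ·)).map Fin.succ :=
  (Finset.map_sort (Fin.succEmb n) S _ _ fun _ _ _ _ => Fin.succ_le_succ_iff.symm).symm

theorem sort_map_castSuccEmb {n : ℕ} (S : Finset (Fin n)) :
    (S.map Fin.castSuccEmb).sort (· ≤ ·) = (S.sort (· ≤ ·)).map Fin.castSucc :=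
  (Finset.map_sort Fin.castSuccEmb S _ _ fun _ _ _ _ => Fin.castSucc_le_castSucc_iff.symm).symm

theorem sort_insert_zero {n : ℕ} (S : Finset (Fin n)) :
    (insert 0 (S.map (Fin.succEmb n))).sort (· ≤ ·) = 0 :: (S.sort (· ≤ ·)).map Fin.succ := by
  rw [Finset.sort_insert _ (fun _ _ => Fin.zero_le _) (by simp [Fin.succ_ne_zero]),
    sort_map_succEmb]

theorem sort_insert_last {n : ℕ} (S : Finset (Fin n)) :
    (insert (Fin.last n) (S.map Fin.castSuccEmb)).sort (· ≤ ·) =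
      (S.sort (· ≤ ·)).map Fin.castSucc ++ [Fin.last n] := by
  have hset : insert (Fin.last n) (S.map Fin.castSuccEmb) =
      ((S.sort (· ≤ ·)).map Fin.castSucc ++ [Fin.last n]).toFinset := by
    ext v
    simp
  rw [hset, List.toFinset_sort]
  · refine List.pairwise_append.2 ⟨?_, List.pairwise_singleton _ _, ?_⟩
    · rw [← sort_map_castSuccEmb]
      exact Finset.pairwise_sort _ _
    · intro a _ b hb
      rw [List.mem_singleton.1 hb]
      exact Fin.le_last a
  · refine List.Nodup.append ?_ (List.nodup_singleton _) ?_
    · exact (Finset.sort_nodup S _).map (Fin.castSucc_injective n)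
    · simp [List.disjoint_singleton, Fin.castSucc_ne_last]

theorem zip_tail_append_pair {β : Type*} (l : List β) (t u : β) :
    (l ++ [t, u]).zip (l ++ [t, u]).tail = (l ++ [t]).zip (l ++ [t]).tail ++ [(t, u)] := by
  induction l with
  | nil => rfl
  | cons c l ih =>
    cases l with
    | nil => rfl
    | cons d l => simpa using ih

theorem gapFactor_map_succ {n : ℕ} (Ψ : A →ₗ[ℂ] ℂ) (x : A) (b : Fin n → A)
    (S : Finset (Fin n)) :
    gapFactor Ψ (Fin.cons x b : Fin (n + 1) → A) (S.map (Fin.succEmb n)) = gapFactor Ψ b S := by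
  simp [gapFactor, sort_map_succEmb, ← List.map_tail, List.zip_map,
    Function.comp_def, ordList_cons]

theorem gapFactor_map_castSucc {n : ℕ} (Ψ : A →ₗ[ℂ] ℂ) (x : A) (b : Fin n → A)
    (S : Finset (Fin n)) :
    gapFactor Ψ (Fin.snoc b x : Fin (n + 1) → A) (S.map Fin.castSuccEmb) = gapFactor Ψ b S := by
  simp [gapFactor, sort_map_castSuccEmb, ← List.map_tail, List.zip_map,
    Function.comp_def, ordList_snoc, (Fin.le_last _).not_gt]

theorem gapFactor_insert_zero {n : ℕ} (Ψ : A →ₗ[ℂ] ℂ) (x : A) (b : Fin n → A)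
    {S : Finset (Fin n)} (hS : S.Nonempty) :
    gapFactor Ψ (Fin.cons x b : Fin (n + 1) → A) (insert 0 (S.map (Fin.succEmb n))) =
      Ψ (headProd b S) * gapFactor Ψ b S := by
  rw [← gapFactor_map_succ Ψ x b S, gapFactor, gapFactor, sort_insert_zero, sort_map_succEmb]
  obtain ⟨s, r, hs⟩ : ∃ s r, S.sort (· ≤ ·) = s :: r :=
    List.exists_cons_of_ne_nil fun h => by
      simpa [h] using (Finset.mem_sort (· ≤ ·)).2 hS.choose_spec
  have hmem : ∀ v, v ∈ S ↔ v ∈ s :: r := fun v => by rw [← hs, Finset.mem_sort]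
  have hle : ∀ v ∈ S, s ≤ v := by
    have := S.pairwise_sort (· ≤ ·)
    rw [hs, List.pairwise_cons] at this
    intro v hv
    rcases List.mem_cons.1 ((hmem v).1 hv) with h | h
    · exact h.ge
    · exact this.1 v h
  rw [hs]
  have hgap : ordList (Fin.cons x b : Fin (n + 1) → A) (fun i => 0 < i ∧ i < s.succ) =
      ordList b fun i => ∀ v ∈ S, i < v := by
    rw [ordList_cons, if_neg (by simp), List.nil_append]
    refine ordList_congr b fun i => ?_
    simp only [Fin.succ_pos, true_and, Fin.succ_lt_succ_iff]
    exact ⟨fun h v hv => h.trans_le (hle v hv), fun h => h s ((hmem s).2 (by simp))⟩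
  simp only [List.map_cons, List.tail_cons, List.zip_cons_cons, List.prod_cons, hgap, headProd]

theorem gapFactor_insert_last {n : ℕ} (Ψ : A →ₗ[ℂ] ℂ) (x : A) (b : Fin n → A)
    {S : Finset (Fin n)} (hS : S.Nonempty) :
    gapFactor Ψ (Fin.snoc b x : Fin (n + 1) → A) (insert (Fin.last n) (S.map Fin.castSuccEmb)) =
      gapFactor Ψ b S * Ψ (tailProd b S) := by
  rw [← gapFactor_map_castSucc Ψ x b S, gapFactor, gapFactor, sort_insert_last,
    sort_map_castSuccEmb]
  obtain ⟨r, t, hs⟩ : ∃ r t, S.sort (· ≤ ·) = r ++ [t] := by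
    rcases List.eq_nil_or_concat' (S.sort (· ≤ ·)) with h | h
    · simpa [h] using (Finset.mem_sort (· ≤ ·)).2 hS.choose_spec
    · exact h
  have hmem : ∀ v, v ∈ S ↔ v ∈ r ++ [t] := fun v => by rw [← hs, Finset.mem_sort]
  have hle : ∀ v ∈ S, v ≤ t := by
    have := S.pairwise_sort (· ≤ ·)
    rw [hs, List.pairwise_append] at this
    intro v hv
    rcases List.mem_append.1 ((hmem v).1 hv) with h | h
    · exact this.2.2 v h t (by simp)
    · exact (List.mem_singleton.1 h).le
  rw [hs]
  have hgap : ordList (Fin.snoc b x : Fin (n + 1) → A)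
      (fun i => t.castSucc < i ∧ i < Fin.last n) = ordList b fun i => ∀ v ∈ S, v < i := by
    rw [ordList_snoc, if_neg (by simp), List.append_nil]
    refine ordList_congr b fun i => ?_
    simp only [Fin.castSucc_lt_last, and_true, Fin.castSucc_lt_castSucc_iff]
    exact ⟨fun h v hv => (hle v hv).trans_lt h, fun h => h t ((hmem t).2 (by simp))⟩
  simp only [List.map_append, List.map_cons, List.map_nil, List.append_assoc, List.cons_append,
    List.nil_append, zip_tail_append_pair, List.prod_append, List.prod_cons, List.prod_nil,
    mul_one, hgap, tailProd]

/-- Product of the `Ψ`-moments of all cyclic gaps of `V`, the wrap-around gap included. -/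
noncomputable def cycGapFactor {n : ℕ} (Ψ : A →ₗ[ℂ] ℂ) (a : Fin n → A) (V : Finset (Fin n)) :
    ℂ :=
  Ψ (tailProd a V * headProd a V) * gapFactor Ψ a V

theorem cycGapFactor_map_succ {n : ℕ} (Ψ : A →ₗ[ℂ] ℂ) (x : A) (b : Fin n → A)
    {S : Finset (Fin n)} (hS : S.Nonempty) :
    cycGapFactor Ψ (Fin.cons x b : Fin (n + 1) → A) (S.map (Fin.succEmb n)) =
      cycGapFactor Ψ (Fin.snoc b x : Fin (n + 1) → A) (S.map Fin.castSuccEmb) := by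
  obtain ⟨s, hs⟩ := hS
  have hhead : ¬ ∀ v ∈ S.map Fin.castSuccEmb, Fin.last n < v := fun h =>
    (Fin.le_last _).not_gt (h _ (Finset.mem_map_of_mem _ hs))
  have htail : ¬ ∀ v ∈ S.map (Fin.succEmb n), v < 0 := fun h =>
    (Fin.zero_le _).not_gt (h _ (Finset.mem_map_of_mem _ hs))
  rw [cycGapFactor, cycGapFactor, gapFactor_map_succ, gapFactor_map_castSucc]
  simp only [tailProd, headProd, ordList_cons, ordList_snoc, if_neg hhead, if_neg htail]
  simp [mul_assoc, Fin.castSucc_lt_last]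

theorem cycGapFactor_insert {n : ℕ} (Ψ : A →ₗ[ℂ] ℂ) (x : A) (b : Fin n → A)
    (S : Finset (Fin n)) :
    cycGapFactor Ψ (Fin.cons x b : Fin (n + 1) → A) (insert 0 (S.map (Fin.succEmb n))) =
      cycGapFactor Ψ (Fin.snoc b x : Fin (n + 1) → A)
        (insert (Fin.last n) (S.map Fin.castSuccEmb)) := by
  have hhead : headProd (Fin.cons x b : Fin (n + 1) → A) (insert 0 (S.map (Fin.succEmb n))) =
      1 := by
    simp [headProd, ordList_false]
  have htail : tailProd (Fin.snoc b x : Fin (n + 1) → A)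
      (insert (Fin.last n) (S.map Fin.castSuccEmb)) = 1 := by
    simp [tailProd, (Fin.le_last _).not_gt, ordList_false]
  have htail' : tailProd (Fin.cons x b : Fin (n + 1) → A) (insert 0 (S.map (Fin.succEmb n))) =
      tailProd b S := by
    simp [tailProd, ordList_cons]
  have hhead' : headProd (Fin.snoc b x : Fin (n + 1) → A)
      (insert (Fin.last n) (S.map Fin.castSuccEmb)) = headProd b S := by
    simp [headProd, ordList_snoc, Fin.castSucc_lt_last]
  rw [cycGapFactor, cycGapFactor, hhead, htail, htail', hhead', mul_one, one_mul]
  rcases S.eq_empty_or_nonempty with rfl | hS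
  · simp [gapFactor, tailProd, headProd]
  · rw [gapFactor_insert_zero Ψ x b hS, gapFactor_insert_last Ψ x b hS]
    ring

theorem cumulAux_two_succ_ofFn (Ψ θ : A →ₗ[ℂ] ℂ) (fuel : ℕ) {n : ℕ} (a : Fin n → A) :
    cumulAux Ψ θ 2 (fuel + 1) (List.ofFn a) =
      θ (List.ofFn a).prod - ∑ V : Finset (Fin n),
        if V.Nonempty ∧ V ≠ Finset.univ then
          cumulAux Ψ θ 2 fuel ((V.sort (· ≤ ·)).map a) * cycGapFactor Ψ a V
        else 0 := by
  obtain ⟨l, hl⟩ : ∃ l, l = List.ofFn a := ⟨_, rfl⟩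
  have hlen : l.length = n := by simp [hl]
  subst hlen
  have ha : a = l.get := List.ofFn_injective (by rw [← hl, List.ofFn_get])
  rw [← hl, ha, cumulAux]
  simp [cycGapFactor, mul_assoc]

theorem exists_eq_map_castSuccEmb_or_insert {n : ℕ} (V : Finset (Fin (n + 1))) :
    ∃ S : Finset (Fin n), V = S.map Fin.castSuccEmb ∨
      V = insert (Fin.last n) (S.map Fin.castSuccEmb) := by
  refine ⟨Finset.univ.filter fun i => i.castSucc ∈ V, ?_⟩
  by_cases h : Fin.last n ∈ V
  · right
    ext v
    cases v using Fin.lastCases <;> simp [h, Fin.castSucc_ne_last]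
  · left
    ext v
    cases v using Fin.lastCases <;> simp [h, Fin.castSucc_ne_last]

theorem map_finRotate_map_castSuccEmb {n : ℕ} (S : Finset (Fin n)) :
    (S.map Fin.castSuccEmb).map (finRotate (n + 1)).toEmbedding = S.map (Fin.succEmb n) := by
  rw [Finset.map_map]
  congr 1
  ext i
  simp

theorem map_finRotate_insert_last {n : ℕ} (S : Finset (Fin n)) :
    (insert (Fin.last n) (S.map Fin.castSuccEmb)).map (finRotate (n + 1)).toEmbedding =
      insert 0 (S.map (Fin.succEmb n)) := by
  rw [Finset.map_insert, map_finRotate_map_castSuccEmb]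
  simp

theorem ofFn_snoc {B : Type*} {n : ℕ} (b : Fin n → B) (x : B) :
    List.ofFn (Fin.snoc b x : Fin (n + 1) → B) = List.ofFn b ++ [x] := by
  rw [List.ofFn_succ']
  simp [-List.ofFn_succ]

/-- With any amount of fuel, the recursion for cyclic free cumulants is invariant under moving
the first letter to the end. -/
theorem cumulAux_two_cons (Ψ dΨ : A →ₗ[ℂ] ℂ) (htr : IsTracial dΨ)
    (fuel : ℕ) (x : A) (l : List A) :
    cumulAux Ψ dΨ 2 fuel (x :: l) = cumulAux Ψ dΨ 2 fuel (l ++ [x]) := by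
  induction fuel generalizing x l with
  | zero => rfl
  | succ fuel ih =>
    obtain ⟨n, b, rfl⟩ : ∃ (n : ℕ) (b : Fin n → A), l = List.ofFn b :=
      ⟨l.length, l.get, (List.ofFn_get l).symm⟩
    rw [← List.ofFn_cons, ← ofFn_snoc, cumulAux_two_succ_ofFn, cumulAux_two_succ_ofFn]
    congr 1
    · simpa only [List.ofFn_cons, ofFn_snoc, List.prod_cons, List.prod_append, List.prod_nil,
        mul_one] using htr x (List.ofFn b).prod
    · rw [← (finRotate (n + 1)).finsetCongr.sum_comp]
      refine Finset.sum_congr rfl fun V _ => ?_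
      have huniv : (finRotate (n + 1)).finsetCongr V = Finset.univ ↔ V = Finset.univ := by
        rw [← (finRotate (n + 1)).finsetCongr.injective.eq_iff (a := V)]
        simp
      have hne : ((finRotate (n + 1)).finsetCongr V).Nonempty ↔ V.Nonempty := by simp
      simp only [huniv, hne, ne_eq]
      refine ite_congr rfl (fun hV => ?_) fun _ => rfl
      rw [Equiv.finsetCongr_apply]
      obtain ⟨S, rfl | rfl⟩ := exists_eq_map_castSuccEmb_or_insert V
      · rw [map_finRotate_map_castSuccEmb, cycGapFactor_map_succ Ψ x b (by simpa using hV.1),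
          sort_map_succEmb, sort_map_castSuccEmb]
        simp [Function.comp_def]
      · rw [map_finRotate_insert_last, cycGapFactor_insert Ψ, sort_insert_zero,
          sort_insert_last]
        congr 1
        simpa [Function.comp_def] using ih x ((S.sort (· ≤ ·)).map b)

/-- cyclic invariance of the cyclic free cumulants. -/
theorem cycCumulant_cyclic_invariant
    {A : Type*} [Ring A] [Algebra ℂ A]
    (Ψ dΨ : A →ₗ[ℂ] ℂ) (hΨ1 : Ψ 1 = 1)
    (htr : IsTracial dΨ) (hd1 : dΨ 1 = 0)
    (x : A) (l : List A) :
    cycCumulant Ψ dΨ (x :: l) = cycCumulant Ψ dΨ (l ++ [x]) := by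
  simpa [cycCumulant] using cumulAux_two_cons Ψ dΨ htr (l.length + 1) x l

end NCProb
end

section
/- Let a be an element of a non-commutative probability space (A, Ψ) (A a unital complex algebra, Ψ a unital linear functional). Then, as formal Laurent series in 1/z, the Cauchy transform of a with respect to [Ψ] satisfies G^{[Ψ]}_a(z) = −(G^Ψ_a)′(z)/G^Ψ_a(z), where G^{[Ψ]}_a(z) = 1/z + Σ_{n≥1} [Ψ](a^{⊗n})/z^{n+1} and G^Ψ_a(z) = 1/z + Σ_{n≥1} Ψ(aⁿ)/z^{n+1}. Equivalently, coefficientwise, [Ψ](a^{⊗n}) = Σ_{k=0}^{n} (n−k)·Ψ(a^k)·β^Ψ_{n−k}(a,…,a) for every n ≥ 1, where β^Ψ_m denotes the m-th Boolean cumulant of Ψ (with Ψ(a⁰) = 1). -/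
open scoped BigOperators

namespace NCProb

variable {A : Type*} [Ring A] [Algebra ℂ A]

section MarkovKrein

/-- The `m`-th Boolean cumulant of `a` with respect to the functional `Ψ`. -/
noncomputable def booleanPow (Ψ : A →ₗ[ℂ] ℂ) (a : A) (m : ℕ) : ℂ :=
  booleanCumulant Ψ (List.replicate m a)

theorem booleanAux_replicate (Ψ : A →ₗ[ℂ] ℂ) (a : A) (m fuel : ℕ) (h : m + 1 ≤ fuel) :
    booleanAux Ψ fuel (List.replicate (m + 1) a) = booleanPow Ψ a (m + 1) := by
  induction m using Nat.strong_induction_on generalizing fuel with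
  | _ m ih =>
    obtain ⟨fuel, rfl⟩ : ∃ f, fuel = f + 1 := ⟨fuel - 1, by omega⟩
    rw [booleanPow, booleanCumulant, List.length_replicate, booleanAux, booleanAux]
    congr 1
    refine Finset.sum_congr rfl fun k hk => ?_
    simp only [List.length_replicate, Nat.add_sub_cancel, Finset.mem_range] at hk
    have hmin : min (k + 1) (m + 1) = k + 1 := by omega
    rw [List.take_replicate, hmin, ih k hk fuel (by omega), ih k hk m (by omega)]

theorem moment_succ_eq_sum (Ψ : A →ₗ[ℂ] ℂ) (hΨ1 : Ψ 1 = 1) (a : A) (m : ℕ) :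
    Ψ (a ^ (m + 1)) =
      ∑ k ∈ Finset.range (m + 1), booleanPow Ψ a (k + 1) * Ψ (a ^ (m - k)) := by
  have hm : booleanPow Ψ a (m + 1) = Ψ (a ^ (m + 1)) -
      ∑ k ∈ Finset.range m, booleanPow Ψ a (k + 1) * Ψ (a ^ (m - k)) := by
    rw [booleanPow, booleanCumulant, List.length_replicate, booleanAux]
    simp only [List.length_replicate, Nat.add_sub_cancel, List.prod_replicate]
    congr 1
    refine Finset.sum_congr rfl fun k hk => ?_
    rw [Finset.mem_range] at hk
    have hmin : min (k + 1) (m + 1) = k + 1 := by omega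
    rw [List.take_replicate, hmin, booleanAux_replicate Ψ a k m hk, List.drop_replicate,
      List.prod_replicate, Nat.add_sub_add_right]
  rw [Finset.sum_range_succ, Nat.sub_self, pow_zero, hΨ1, mul_one, hm]
  ring

theorem sum_powerset_sort_eq {α M : Type*} [LinearOrder α] [AddCommMonoid M]
    (L : List α) (hL : L.Pairwise (· < ·)) (F : List α → M) :
    ∑ V ∈ L.toFinset.powerset, F (V.sort (· ≤ ·)) = (L.sublists'.map F).sum := by
  induction L generalizing F with
  | nil => simp
  | cons x L ih =>
    rw [List.pairwise_cons] at hL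
    have hx : x ∉ L.toFinset := fun h => lt_irrefl x (hL.1 x (List.mem_toFinset.1 h))
    rw [List.toFinset_cons, Finset.sum_powerset_insert hx, List.sublists'_cons, List.map_append,
      List.sum_append, List.map_map, ih hL.2, ← ih hL.2 (F ∘ List.cons x)]
    congr 1
    refine Finset.sum_congr rfl fun V hV => ?_
    rw [Finset.mem_powerset] at hV
    rw [Finset.sort_insert (r := (· ≤ ·))
      (fun b hb => (hL.1 b (List.mem_toFinset.1 (hV hb))).le) (fun h => hx (hV h))]
    rfl

theorem sum_finset_fin_sort_eq {M : Type*} [AddCommMonoid M] (n : ℕ) (G : List ℕ → M) :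
    ∑ V : Finset (Fin n), G ((V.sort (· ≤ ·)).map Fin.val) =
      ((List.range' 0 n).sublists'.map G).sum := by
  have h := sum_powerset_sort_eq (List.finRange n) (List.pairwise_lt_finRange n)
    (fun l => G (l.map Fin.val))
  rw [List.toFinset_finRange, Finset.powerset_univ] at h
  rw [h, ← List.range_eq_range', ← List.map_coe_finRange_eq_range, List.sublists'_map,
    List.map_map]
  rfl

/-- A sum over the sublists of an interval, split according to the first entry. -/
theorem sum_sublists_range'_eq {M : Type*} [AddCommMonoid M] (G : List ℕ → M) (j k : ℕ) :
    ((List.range' j k).sublists'.map G).sum = G [] + ∑ i ∈ Finset.range k,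
      ((List.range' (j + i + 1) (k - 1 - i)).sublists'.map fun l => G ((j + i) :: l)).sum := by
  induction k generalizing j with
  | zero => simp
  | succ k ih =>
    rw [List.range'_succ, List.sublists'_cons, List.map_append, List.sum_append, List.map_map,
      ih, Finset.sum_range_succ', add_assoc]
    congr 2
    refine Finset.sum_congr rfl fun i hi => ?_
    rw [show j + 1 + i = j + (i + 1) by omega, show k - 1 - i = k + 1 - 1 - (i + 1) by omega]

/-- The weight `∏ b(gaps) * c(last)` of the chain starting at `x` and running through `l`. -/
def chainWeight (b c : ℕ → ℂ) : ℕ → List ℕ → ℂ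
  | x, [] => c x
  | x, y :: l => b (y - x) * chainWeight b c y l

theorem chainWeight_eq (b c : ℕ → ℂ) (x : ℕ) (l : List ℕ) :
    chainWeight b c x l = (((x :: l).zip l).map fun p => b (p.2 - p.1)).prod *
      c ((x :: l).getLast (List.cons_ne_nil x l)) := by
  induction l generalizing x with
  | nil => simp [chainWeight]
  | cons y l ih => simp [chainWeight, ih, mul_assoc]

theorem sum_chainWeight_eq (b c M : ℕ → ℂ) (hM0 : M 0 = 1)
    (hM : ∀ m, M (m + 1) = ∑ k ∈ Finset.range (m + 1), b (k + 1) * M (m - k)) (d x : ℕ) :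
    ((List.range' (x + 1) d).sublists'.map (chainWeight b c x)).sum =
      ∑ t ∈ Finset.range (d + 1), M t * c (x + t) := by
  induction d using Nat.strong_induction_on generalizing x with
  | _ d ih =>
    have hstep : ∀ i ∈ Finset.range d,
        ((List.range' (x + 1 + i + 1) (d - 1 - i)).sublists'.map
          fun l => chainWeight b c x ((x + 1 + i) :: l)).sum =
        ∑ t ∈ Finset.range (d - i), b (i + 1) * M t * c (x + (i + t + 1)) := by
      intro i hi
      rw [Finset.mem_range] at hi
      simp only [chainWeight]
      rw [List.sum_map_mul_left, ih (d - 1 - i) (by omega), Finset.mul_sum,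
        show d - 1 - i + 1 = d - i by omega]
      refine Finset.sum_congr rfl fun t _ => ?_
      rw [show x + 1 + i - x = i + 1 by omega, show x + 1 + i + t = x + (i + t + 1) by omega,
        mul_assoc]
    rw [sum_sublists_range'_eq, Finset.sum_congr rfl hstep, Finset.sum_range_succ', hM0, one_mul,
      ← Finset.sum_range_diag_flip d fun i t => b (i + 1) * M t * c (x + (i + t + 1)), add_comm]
    simp only [chainWeight, add_zero]
    congr 1
    refine Finset.sum_congr rfl fun m _ => ?_
    rw [hM, Finset.sum_mul]
    refine Finset.sum_congr rfl fun k hk => ?_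
    rw [Finset.mem_range] at hk
    rw [show k + (m - k) = m by omega]

theorem ordList_const {B : Type*} {n : ℕ} (a : B) (P : Fin n → Prop) [DecidablePred P] :
    ordList (fun _ : Fin n => a) P = List.replicate (Finset.univ.filter P).card a := by
  rw [ordList, List.map_const']
  congr 1

/-- The cyclic weight of a list of cut points in `{0, …, n - 1}`. -/
def cyclicWeight (b : ℕ → ℂ) (n : ℕ) : List ℕ → ℂ
  | [] => 0
  | x :: l => chainWeight b (fun q => b (n - q + x)) x l

theorem card_filter_forall_le {n : ℕ} (V : Finset (Fin n)) (hV : V.Nonempty) :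
    (Finset.univ.filter fun i => ∀ v ∈ V, v ≤ i).card = n - (V.max' hV : ℕ) := by
  rw [← Fin.card_Ici]
  congr 1
  ext i
  simp [Finset.max'_le_iff]

theorem card_filter_forall_lt {n : ℕ} (V : Finset (Fin n)) (hV : V.Nonempty) :
    (Finset.univ.filter fun i => ∀ v ∈ V, i < v).card = (V.min' hV : ℕ) := by
  rw [← Fin.card_Iio]
  congr 1
  ext i
  simp [Finset.lt_min'_iff]

theorem mkValue_const_eq (Ψ : A →ₗ[ℂ] ℂ) (a : A) (n : ℕ) :
    mkValue Ψ (fun _ : Fin n => a) = ∑ V : Finset (Fin n),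
      cyclicWeight (booleanPow Ψ a) n ((V.sort (· ≤ ·)).map Fin.val) := by
  rw [mkValue]
  refine Finset.sum_congr rfl fun V _ => ?_
  by_cases hV : V.Nonempty
  · have hgap : ∀ p : Fin n × Fin n,
        booleanCumulant Ψ (ordList (fun _ : Fin n => a) fun i => p.1 ≤ i ∧ i < p.2) =
          booleanPow Ψ a (p.2 - p.1) := by
      intro p
      rw [ordList_const, booleanPow, ← Fin.card_Ico]
      congr 3
      ext i
      simp
    rw [if_pos hV]
    simp only [hgap]
    rw [ordList_const, ordList_const, List.replicate_append_replicate,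
      card_filter_forall_le V hV, card_filter_forall_lt V hV,
      Finset.max'_eq_sorted_last, Finset.min'_eq_sorted_zero]
    have hne : V.sort (· ≤ ·) ≠ [] := by
      intro h
      have := congrArg List.length h
      simp at this
      exact hV.ne_empty this
    simp only [← List.getLast_eq_getElem hne, ← List.head_eq_getElem hne]
    generalize V.sort (· ≤ ·) = L at hne
    obtain ⟨x, l, rfl⟩ := List.exists_cons_of_ne_nil hne
    rw [List.map_cons, cyclicWeight, chainWeight_eq]
    simp only [← List.map_cons, List.getLast_map, List.zip_map, List.map_map]
    rfl
  · rw [if_neg hV, Finset.not_nonempty_iff_eq_empty.1 hV]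
    simp [cyclicWeight]

end MarkovKrein

/-- the inverse Markov–Krein transform relation
`[Ψ](a^{⊗n}) = Σ_{k=0}^{n} (n−k)·Ψ(a^k)·β^Ψ_{n−k}(a,…,a)`, which is the
coefficientwise form of `G^{[Ψ]}_a(z) = −(G^Ψ_a)'(z)/G^Ψ_a(z)`. -/
theorem mkValue_powers_eq
    {A : Type*} [Ring A] [Algebra ℂ A]
    (Ψ : A →ₗ[ℂ] ℂ) (hΨ1 : Ψ 1 = 1) (a : A) :
    ∀ n : ℕ, 1 ≤ n →
      mkValue Ψ (fun _ : Fin n => a) =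
        ∑ k ∈ Finset.range (n + 1),
          ((n : ℂ) - (k : ℂ)) * Ψ (a ^ k) *
            booleanCumulant Ψ (List.replicate (n - k) a) := by
  intro n _
  rw [mkValue_const_eq, sum_finset_fin_sort_eq, sum_sublists_range'_eq, cyclicWeight, zero_add,
    Finset.sum_range_succ, sub_self, zero_mul, zero_mul, add_zero]
  have hstart : ∀ s ∈ Finset.range n,
      ((List.range' (0 + s + 1) (n - 1 - s)).sublists'.map
        fun l => cyclicWeight (booleanPow Ψ a) n ((0 + s) :: l)).sum =
      ∑ t ∈ Finset.range (n - s), Ψ (a ^ t) * booleanPow Ψ a (n - t) := by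
    intro s hs
    rw [Finset.mem_range] at hs
    simp only [cyclicWeight, zero_add]
    refine (sum_chainWeight_eq _ _ (fun m => Ψ (a ^ m)) (by simpa using hΨ1)
      (moment_succ_eq_sum Ψ hΨ1 a) _ _).trans ?_
    rw [show n - 1 - s + 1 = n - s by omega]
    refine Finset.sum_congr rfl fun t ht => ?_
    rw [Finset.mem_range] at ht
    rw [show n - (s + t) + s = n - t by omega]
  rw [Finset.sum_congr rfl hstart, Finset.sum_comm' (t' := Finset.range n)
    (s' := fun t => Finset.range (n - t)) (by simp only [Finset.mem_range]; omega)]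
  refine Finset.sum_congr rfl fun t ht => ?_
  rw [Finset.mem_range] at ht
  rw [Finset.sum_const, Finset.card_range, nsmul_eq_mul, Nat.cast_sub ht.le, mul_assoc]
  rfl

end NCProb
end
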